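/- arXiv:0706.1701 — 2 statements merged into one kernel-verified Lean document; each statement's English description precedes it below -/
import Mathlib

section
/- Let R ⊆ S^r be a finite r-ary relation on a finite set S, and ε > 0. If for all subsets S₁,…,S_r ⊆ S we have |R(S₁,…,S_r) − |R|·∏|Sᵢ|/|S|^r| < ε|R|, then for all functions f₁,…,f_r : S → [0,1], not all identically zero, we have |R(f₁,…,f_r) − |R|·∏|fᵢ|₁/|S|^r| < ε|R|, where R(f₁,…,f_r) = Σ_{(x₁,…,x_r)∈R} ∏ᵢ fᵢ(xᵢ) and |f|₁ = Σ_{x∈S} |f(x)|. -/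
open Finset

attribute [local instance] Classical.propDecidable

/-- `R(S₁,…,S_r)`: the number of tuples of `R` whose `i`-th coordinate lies in `T i`. -/
noncomputable def relCount {S : Type*} {r : ℕ} (R : Finset (Fin r → S))
    (T : Fin r → Finset S) : ℝ :=
  ((R.filter fun t => ∀ i, t i ∈ T i).card : ℝ)

/-- `R(f₁,…,f_r) = Σ_{(x₁,…,x_r)∈R} ∏ᵢ fᵢ(xᵢ)`. -/
noncomputable def relApply {S : Type*} {r : ℕ} (R : Finset (Fin r → S))
    (f : Fin r → S → ℝ) : ℝ :=
  ∑ t ∈ R, ∏ i, f i (t i)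

/-- `R` is an ε-expander relation. -/
def IsExpanderRel {S : Type*} [Fintype S] {r : ℕ} (ε : ℝ) (R : Finset (Fin r → S)) : Prop :=
  ∀ T : Fin r → Finset S,
    |relCount R T - (R.card : ℝ) * (∏ i, ((T i).card : ℝ)) / (Fintype.card S : ℝ) ^ r|
      < ε * R.card

/-!
The deviation `f ↦ R(f₁,…,f_r) - |R| ∏ᵢ (∑ₓ fᵢ x) / |S|^r` is multilinear. If a multilinear map
sends a product of sets into a convex set, then it sends the product of their convex hulls there
too, since one coordinate at a time it is linear. The cube `[0,1]^S` is the convex hull of the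
indicator functions of subsets of `S`, and on tuples of indicators the deviation lies in
`(-ε|R|, ε|R|)` by the expander hypothesis.
-/

theorem multilinearMap_mem_of_forall_mem_convexHull {𝕜 ι F : Type*} {E : ι → Type*}
    [Semiring 𝕜] [PartialOrder 𝕜] [Finite ι] [∀ i, AddCommMonoid (E i)] [∀ i, Module 𝕜 (E i)]
    [AddCommMonoid F] [Module 𝕜 F]
    (M : MultilinearMap 𝕜 E F) {s : ∀ i, Set (E i)} {C : Set F} (hC : Convex 𝕜 C)
    (hM : ∀ g, (∀ i, g i ∈ s i) → M g ∈ C) {f : ∀ i, E i}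
    (hf : ∀ i, f i ∈ convexHull 𝕜 (s i)) : M f ∈ C := by
  cases nonempty_fintype ι
  suffices partial_hull : ∀ (t : Finset ι) (g : ∀ i, E i),
      (∀ i ∈ t, g i ∈ convexHull 𝕜 (s i)) → (∀ i ∉ t, g i ∈ s i) → M g ∈ C from
    partial_hull univ f (fun i _ => hf i) (by simp)
  intro t
  induction t using Finset.induction_on with
  | empty => exact fun g _ hg => hM g fun i => hg i (notMem_empty i)
  | insert a t ha ih =>
    intro g hg_hull hg
    have vertex_mem : s a ⊆ M.toLinearMap g a ⁻¹' C := by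
      refine fun x hx => ih _ (fun i hi => ?_) fun i hi => ?_
      · simpa [ne_of_mem_of_not_mem hi ha] using hg_hull i (mem_insert_of_mem hi)
      · rcases eq_or_ne i a with rfl | hia
        · simpa using hx
        · simpa [hia] using hg i (by simp [hia, hi])
    have hull_mem : convexHull 𝕜 (s a) ⊆ M.toLinearMap g a ⁻¹' C :=
      convexHull_min vertex_mem (hC.linear_preimage _)
    simpa using hull_mem (hg_hull a (mem_insert_self a t))

theorem convexHull_range_indicator_one {𝕜 S : Type*} [Field 𝕜] [LinearOrder 𝕜]
    [IsStrictOrderedRing 𝕜] [Finite S] :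
    convexHull 𝕜 (Set.range fun T : Finset S => (T : Set S).indicator (1 : S → 𝕜)) =
      Set.Icc 0 1 := by
  have range_eq : (Set.range fun T : Finset S => (T : Set S).indicator (1 : S → 𝕜)) =
      Set.univ.pi fun _ => {0, 1} := by
    cases nonempty_fintype S
    ext g
    refine ⟨?_, fun hg => ⟨univ.filter fun x => g x = 1, ?_⟩⟩
    · rintro ⟨T, rfl⟩ x -
      exact Set.indicator_eq_zero_or_self _ _ _
    · ext x
      rcases hg x trivial with h | h <;> simp_all
  simp_rw [range_eq, convexHull_pi, convexHull_pair, segment_eq_Icc zero_le_one]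
  exact Set.pi_univ_Icc 0 1

section Deviation

variable {S : Type*} {r : ℕ} (R : Finset (Fin r → S))

theorem relApply_indicator_one (T : Fin r → Finset S) :
    relApply R (fun i => (T i : Set S).indicator 1) = relCount R T := by
  simp [relApply, relCount, Set.indicator_apply, prod_ite_zero]

variable [Fintype S]

/-- The deviation `f ↦ R(f₁,…,f_r) - |R| ∏ᵢ (∑ₓ fᵢ x) / |S|^r` as a multilinear form. The sums
`∑ₓ fᵢ x` stand in for the norms `|fᵢ|₁`, which agree with them for nonnegative functions only. -/
noncomputable def relDeviation : MultilinearMap ℝ (fun _ : Fin r => S → ℝ) ℝ :=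
  (∑ t ∈ R, (MultilinearMap.mkPiAlgebra ℝ (Fin r) ℝ).compLinearMap
      fun i => LinearMap.proj (t i)) -
    ((R.card : ℝ) / (Fintype.card S : ℝ) ^ r) •
      (MultilinearMap.mkPiAlgebra ℝ (Fin r) ℝ).compLinearMap fun _ => ∑ x, LinearMap.proj x

theorem relDeviation_apply (f : Fin r → S → ℝ) :
    relDeviation R f =
      relApply R f - (R.card : ℝ) * (∏ i, ∑ x, f i x) / (Fintype.card S : ℝ) ^ r := by
  simp [relDeviation, relApply, div_mul_eq_mul_div]

theorem relDeviation_indicator_one (T : Fin r → Finset S) :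
    relDeviation R (fun i => (T i : Set S).indicator 1) =
      relCount R T - (R.card : ℝ) * (∏ i, ((T i).card : ℝ)) / (Fintype.card S : ℝ) ^ r := by
  simp [relDeviation_apply, relApply_indicator_one, Set.indicator_apply]

end Deviation

/-- If `R ⊆ S^r` is an ε-expander relation (the set inequality holds for all subsets),
then the corresponding inequality holds for all `[0,1]`-valued functions, not all
identically zero. -/
theorem expanderRel_functional_bound
    {S : Type*} [Fintype S] {r : ℕ} (R : Finset (Fin r → S)) (ε : ℝ)
    (hR : IsExpanderRel ε R)
    (f : Fin r → S → ℝ) (hf0 : ∀ i x, 0 ≤ f i x) (hf1 : ∀ i x, f i x ≤ 1)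
    (hne : ¬ ∀ i x, f i x = 0) :
    |relApply R f - (R.card : ℝ) * (∏ i, ∑ x, |f i x|) / (Fintype.card S : ℝ) ^ r|
      < ε * R.card := by
  have deviation_eq : relDeviation R f =
      relApply R f - (R.card : ℝ) * (∏ i, ∑ x, |f i x|) / (Fintype.card S : ℝ) ^ r := by
    simp only [relDeviation_apply, abs_of_nonneg (hf0 _ _)]
  have cube_mem (i : Fin r) : f i ∈ convexHull ℝ
      (Set.range fun T : Finset S => (T : Set S).indicator (1 : S → ℝ)) := by
    rw [convexHull_range_indicator_one]
    exact ⟨hf0 i, hf1 i⟩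
  rw [← deviation_eq, ← Real.norm_eq_abs, ← mem_ball_zero_iff]
  refine multilinearMap_mem_of_forall_mem_convexHull _ (convex_ball 0 _) (fun g hg => ?_) cube_mem
  choose T hT using hg
  obtain rfl : (fun i => (T i : Set S).indicator 1) = g := funext hT
  rw [mem_ball_zero_iff, Real.norm_eq_abs, relDeviation_indicator_one]
  exact hR T
end

section
/- Let τ be a finite relational type with all relation symbols at most r-ary, let k be a positive integer and ε > 0. Then there is Δ > 0 such that for every sufficiently large n there exists a relational structure A of type τ on n elements with girth at least k, maximal degree at most Δ, in which every relation of arity at least 2 is an ε-expander relation. -/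
/-!
The random construction is derandomized. Tuples are added one at a time, and a new tuple is only
allowed if its coordinates have degree less than `Δ` and are pairwise far apart in the Gaifman
graph. This keeps the degrees at most `Δ`, and no short cycle arises, since such a cycle would
contain a short path between two coordinates of the new tuple. As long as there are only linearly
many tuples, few vertices are saturated and balls have bounded size, so all but a small proportion
of the possible tuples are allowed.

The expansion is controlled by the method of conditional expectations: the discrepancy
`R(T₁,…,T_a) - |R| ∏ᵢ |Tᵢ| / n ^ a` changes by a term of absolute value at most `1` and average
`0` over all tuples, so some allowed tuple multiplies `∑ T, cosh (η * discrepancy R T)` by at most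
`1 + 2 η²`. This sum is `2 ^ (n a)` for the empty relation, hence at most
`exp (n a + 2 η² D n)` after `D n` steps, and for small `η` and large `D` this forces every
discrepancy to be less than `ε D n`.
-/

open Finset

attribute [local instance] Classical.propDecidable

/-- A twisted product of relational structures `(A, RA)` and `(B, RB)` of type `ar : ι → ℕ`:
a family of relations `RC` on `A × B`, together with, for each symbol `i` and each tuple
`t ∈ RB i`, bijections `α i t j : A → π_B⁻¹(t j)` (injective maps into the fiber over `t j`)
such that `x ∈ RA i ↔ (α i t · (x ·)) ∈ RC i`, the second projection is a homomorphism, and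
every tuple of `RC i` arises as such an image. -/
structure TwistedProduct {ι A B : Type*} (ar : ι → ℕ)
    (RA : ∀ i, Finset (Fin (ar i) → A))
    (RB : ∀ i, Finset (Fin (ar i) → B))
    (RC : ∀ i, Finset (Fin (ar i) → A × B)) where
  α : ∀ i, (Fin (ar i) → B) → Fin (ar i) → A → A × B
  α_inj : ∀ i t, t ∈ RB i → ∀ j, Function.Injective (α i t j)
  α_snd : ∀ i t, t ∈ RB i → ∀ j x, (α i t j x).2 = t j
  mem_iff : ∀ i t, t ∈ RB i → ∀ x : Fin (ar i) → A,
    x ∈ RA i ↔ (fun j => α i t j (x j)) ∈ RC i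
  proj_mem : ∀ i, ∀ u ∈ RC i, (fun j => (u j).2) ∈ RB i
  exists_preimage : ∀ i, ∀ u ∈ RC i,
    ∃ x ∈ RA i, ∀ j, α i (fun j' => (u j').2) j (x j) = u j

/-- The degree of an element: the number of relational tuples containing it,
with multiplicity. -/
noncomputable def degree {ι X : Type*} [Fintype ι] (ar : ι → ℕ)
    (R : ∀ i, Finset (Fin (ar i) → X)) (x : X) : ℕ :=
  ∑ i, ∑ t ∈ R i, (Finset.univ.filter fun j => t j = x).card

/-- The maximal degree `Δ` of a relational structure. -/
noncomputable def maxDegree {ι X : Type*} [Fintype ι] [Fintype X] (ar : ι → ℕ)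
    (R : ∀ i, Finset (Fin (ar i) → X)) : ℕ :=
  Finset.univ.sup (degree ar R)

/-- `f` is a homomorphism of relational structures. -/
def IsHom {ι X Y : Type*} (ar : ι → ℕ) (RX : ∀ i, Finset (Fin (ar i) → X))
    (RY : ∀ i, Finset (Fin (ar i) → Y)) (f : X → Y) : Prop :=
  ∀ i, ∀ t ∈ RX i, (fun j => f (t j)) ∈ RY i

/-- Cycle data of length `m ≥ 2` in a relational structure: distinct points `x p` and
distinct relational tuples `s p` such that each tuple `s p` contains both `x p` and the
cyclically next point `x (p+1)`. -/
def IsRelCycleData {ι X : Type*} (ar : ι → ℕ) (R : ∀ i, Finset (Fin (ar i) → X)) (m : ℕ)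
    (x : Fin m → X) (s : Fin m → Σ i, Fin (ar i) → X) : Prop :=
  2 ≤ m ∧ Function.Injective x ∧ Function.Injective s ∧
  (∀ p, (s p).2 ∈ R (s p).1) ∧
  (∀ p, ∃ j, (s p).2 j = x p) ∧
  (∀ p : Fin m, ∃ j, (s p).2 j =
    x ⟨((p : ℕ) + 1) % m, Nat.mod_lt _ ((Nat.zero_le _).trans_lt p.isLt)⟩)

/-- The structure has a cycle of length `m`: either the degenerate case `m = 1` (a tuple
with a repeated coordinate) or cycle data of length `m ≥ 2`. -/
def HasRelCycle {ι X : Type*} (ar : ι → ℕ) (R : ∀ i, Finset (Fin (ar i) → X)) (m : ℕ) :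
    Prop :=
  (m = 1 ∧ ∃ i, ∃ t ∈ R i, ∃ j j' : Fin (ar i), j ≠ j' ∧ t j = t j') ∨
  (∃ x s, IsRelCycleData ar R m x s)

section ExponentialAveraging

variable {X K : Type*} [Fintype X] [DecidableEq X]

lemma sum_le_card_compl_of_sum_eq_zero {f : X → ℝ} (hf : ∀ t, -1 ≤ f t) (hsum : ∑ t, f t = 0)
    (A : Finset X) : ∑ t ∈ A, f t ≤ #Aᶜ := by
  have hcompl : ∑ t ∈ Aᶜ, -f t ≤ #Aᶜ := by
    simpa using sum_le_card_nsmul Aᶜ (fun t => -f t) 1 fun t _ => neg_le.1 (hf t)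
  rw [sum_neg_distrib] at hcompl
  linarith [sum_add_sum_compl A f]

lemma sum_exp_mul_le {f : X → ℝ} (hf : ∀ t, |f t| ≤ 1) (hsum : ∑ t, f t = 0) {A : Finset X}
    {η : ℝ} (hη : 0 ≤ η) (hη1 : η ≤ 1) (hA : #Aᶜ ≤ η * #A) :
    ∑ t ∈ A, Real.exp (η * f t) ≤ (1 + 2 * η ^ 2) * #A := by
  have hexp (t : X) : Real.exp (η * f t) ≤ 1 + η ^ 2 + η * f t := by
    have habs : |η * f t| ≤ η := by
      rw [abs_mul, abs_of_nonneg hη]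
      exact mul_le_of_le_one_right hη (hf t)
    have htaylor := (abs_le.1 (Real.abs_exp_sub_one_sub_id_le (habs.trans hη1))).2
    linarith [sq_le_sq' (neg_le_of_abs_le habs) (le_of_abs_le habs)]
  have hfA : ∑ t ∈ A, f t ≤ η * #A :=
    (sum_le_card_compl_of_sum_eq_zero (fun t => neg_le_of_abs_le (hf t)) hsum A).trans hA
  calc ∑ t ∈ A, Real.exp (η * f t)
      ≤ ∑ t ∈ A, (1 + η ^ 2 + η * f t) := sum_le_sum fun t _ => hexp t
    _ = (1 + η ^ 2) * #A + η * ∑ t ∈ A, f t := by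
        rw [sum_add_distrib, sum_const, nsmul_eq_mul, ← mul_sum, mul_comm]
    _ ≤ (1 + η ^ 2) * #A + η * (η * #A) := by gcongr
    _ = (1 + 2 * η ^ 2) * #A := by ring

lemma sum_cosh_add_mul_le {f : X → ℝ} (hf : ∀ t, |f t| ≤ 1) (hsum : ∑ t, f t = 0)
    {A : Finset X} {η : ℝ} (hη : 0 ≤ η) (hη1 : η ≤ 1) (hA : #Aᶜ ≤ η * #A) (d : ℝ) :
    ∑ t ∈ A, Real.cosh (d + η * f t) ≤ (1 + 2 * η ^ 2) * #A * Real.cosh d := by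
  have hpos := sum_exp_mul_le hf hsum hη hη1 hA
  have hneg := sum_exp_mul_le (f := fun t => -f t) (by simpa using hf) (by simpa using hsum)
    hη hη1 hA
  calc ∑ t ∈ A, Real.cosh (d + η * f t)
      = (Real.exp d * ∑ t ∈ A, Real.exp (η * f t)
          + Real.exp (-d) * ∑ t ∈ A, Real.exp (η * -f t)) / 2 := by
        simp only [Real.cosh_eq, mul_sum, ← sum_add_distrib, sum_div, ← Real.exp_add, neg_add,
          mul_neg]
    _ ≤ (Real.exp d * ((1 + 2 * η ^ 2) * #A) + Real.exp (-d) * ((1 + 2 * η ^ 2) * #A)) / 2 := by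
        gcongr
    _ = (1 + 2 * η ^ 2) * #A * Real.cosh d := by rw [Real.cosh_eq]; ring

lemma exists_mem_sum_cosh_add_mul_le [Fintype K] [Nonempty X] {f : K → X → ℝ}
    (hf : ∀ c t, |f c t| ≤ 1) (hsum : ∀ c, ∑ t, f c t = 0) {A : Finset X} {η : ℝ} (hη : 0 ≤ η)
    (hη1 : η ≤ 1) (hA : #Aᶜ ≤ η * #A) (d : K → ℝ) :
    ∃ t ∈ A, ∑ c, Real.cosh (d c + η * f c t) ≤ (1 + 2 * η ^ 2) * ∑ c, Real.cosh (d c) := by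
  have hne : A.Nonempty := by
    rw [nonempty_iff_ne_empty]
    rintro rfl
    simp at hA
  refine exists_le_of_sum_le hne ?_
  calc ∑ t ∈ A, ∑ c, Real.cosh (d c + η * f c t)
      = ∑ c, ∑ t ∈ A, Real.cosh (d c + η * f c t) := sum_comm
    _ ≤ ∑ c, (1 + 2 * η ^ 2) * #A * Real.cosh (d c) :=
        sum_le_sum fun c _ => sum_cosh_add_mul_le (hf c) (hsum c) hη hη1 hA (d c)
    _ = ∑ _t ∈ A, (1 + 2 * η ^ 2) * ∑ c, Real.cosh (d c) := by
        rw [sum_const, nsmul_eq_mul, ← mul_sum]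
        ring

end ExponentialAveraging

section Discrepancy

variable {V : Type*} [Fintype V] {a : ℕ}

/-- The proportion `∏ᵢ |T i| / |V| ^ a` of the tuples in `V ^ a` lying in the box `∏ᵢ T i`. -/
noncomputable def boxDensity (T : Fin a → Finset V) : ℝ :=
  (∏ i, (#(T i) : ℝ)) / (Fintype.card V : ℝ) ^ a

/-- The signed error `R(T₁,…,T_a) - |R| ∏ᵢ |T i| / |V| ^ a` in the definition of an expander
relation. -/
noncomputable def discrepancy (R : Finset (Fin a → V)) (T : Fin a → Finset V) : ℝ :=
  relCount R T - #R * boxDensity T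

/-- The exponential potential of `R`. It controls the discrepancies of all boxes at once, and a
good choice of one further tuple multiplies it by at most `1 + 2 η²`. -/
noncomputable def discrepancyPotential (η : ℝ) (R : Finset (Fin a → V)) : ℝ :=
  ∑ T, Real.cosh (η * discrepancy R T)

lemma boxDensity_nonneg (T : Fin a → Finset V) : 0 ≤ boxDensity T := by
  unfold boxDensity
  positivity

lemma boxDensity_le_one (T : Fin a → Finset V) : boxDensity T ≤ 1 := by
  refine div_le_one_of_le₀ ?_ (by positivity)
  simpa using prod_le_prod (s := univ) (fun i _ => Nat.cast_nonneg (#(T i)))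
    fun i _ => Nat.cast_le (α := ℝ).2 (card_le_univ (T i))

lemma discrepancy_eq_sum (R : Finset (Fin a → V)) (T : Fin a → Finset V) :
    discrepancy R T = ∑ t ∈ R, ((if ∀ i, t i ∈ T i then 1 else 0) - boxDensity T) := by
  rw [sum_sub_distrib, sum_boole, sum_const, nsmul_eq_mul, discrepancy, relCount]

lemma discrepancy_insert {R : Finset (Fin a → V)} {t : Fin a → V} (ht : t ∉ R)
    (T : Fin a → Finset V) :
    discrepancy (insert t R) T = discrepancy R T + discrepancy {t} T := by
  simp only [discrepancy_eq_sum, sum_insert ht, sum_singleton, add_comm]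

lemma abs_discrepancy_singleton_le_one (t : Fin a → V) (T : Fin a → Finset V) :
    |discrepancy {t} T| ≤ 1 := by
  have hnonneg := boxDensity_nonneg T
  have hle := boxDensity_le_one T
  rw [discrepancy_eq_sum, sum_singleton, abs_le]
  split_ifs <;> constructor <;> linarith

lemma relCount_univ (T : Fin a → Finset V) :
    relCount univ T = ∏ i, (#(T i) : ℝ) := by
  rw [relCount, ← Nat.cast_prod, ← Fintype.card_piFinset]
  congr 2
  ext t
  simp

lemma sum_discrepancy_singleton [Nonempty V] (T : Fin a → Finset V) :
    ∑ t, discrepancy {t} T = 0 := by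
  have hcard : (Fintype.card V : ℝ) ^ a * boxDensity T = ∏ i, (#(T i) : ℝ) :=
    mul_div_cancel₀ _ (by positivity)
  calc ∑ t, discrepancy {t} T = discrepancy univ T := by
        simp only [discrepancy_eq_sum, sum_singleton]
    _ = 0 := by simp [discrepancy, relCount_univ, ← hcard]

lemma discrepancyPotential_empty (η : ℝ) :
    discrepancyPotential η (∅ : Finset (Fin a → V)) = 2 ^ (Fintype.card V * a) := by
  simp [discrepancyPotential, discrepancy, relCount, pow_mul]

lemma exists_mem_discrepancyPotential_insert_le [Nonempty V] (R : Finset (Fin a → V))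
    {A : Finset (Fin a → V)} (hRA : ∀ t ∈ A, t ∉ R) {η : ℝ} (hη : 0 ≤ η) (hη1 : η ≤ 1)
    (hA : #Aᶜ ≤ η * #A) :
    ∃ t ∈ A, discrepancyPotential η (insert t R)
      ≤ (1 + 2 * η ^ 2) * discrepancyPotential η R := by
  obtain ⟨t, htA, ht⟩ := exists_mem_sum_cosh_add_mul_le
    (f := fun T t => discrepancy {t} T) (fun T t => abs_discrepancy_singleton_le_one t T)
    sum_discrepancy_singleton hη hη1 hA (fun T => η * discrepancy R T)
  refine ⟨t, htA, ?_⟩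
  simpa only [discrepancyPotential, discrepancy_insert (hRA t htA), mul_add] using ht

lemma exp_mul_abs_discrepancy_le {η : ℝ} (hη : 0 ≤ η) (R : Finset (Fin a → V))
    (T : Fin a → Finset V) :
    Real.exp (η * |discrepancy R T|) ≤ 2 * discrepancyPotential η R :=
  calc Real.exp (η * |discrepancy R T|)
      = Real.exp |η * discrepancy R T| := by rw [abs_mul, abs_of_nonneg hη]
    _ ≤ 2 * Real.cosh (η * discrepancy R T) := by
        rw [Real.cosh_eq]
        linarith [Real.exp_abs_le (η * discrepancy R T)]
    _ ≤ 2 * discrepancyPotential η R := by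
        gcongr
        exact single_le_sum (f := fun T => Real.cosh (η * discrepancy R T))
          (fun T _ => (Real.cosh_pos _).le) (mem_univ T)

lemma isExpanderRel_of_discrepancyPotential_le {R : Finset (Fin a → V)} {η ε : ℝ} (hη : 0 < η)
    (hR : discrepancyPotential η R ≤ (1 + 2 * η ^ 2) ^ #R * 2 ^ (Fintype.card V * a))
    (hε : Fintype.card V * a + 1 + 2 * η ^ 2 * #R < η * ε * #R) : IsExpanderRel ε R := by
  intro T
  have hgrowth : (1 + 2 * η ^ 2) ^ #R ≤ Real.exp (2 * η ^ 2 * #R) := by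
    rw [mul_comm _ (#R : ℝ), Real.exp_nat_mul]
    gcongr
    linarith [Real.add_one_le_exp (2 * η ^ 2)]
  have htwo : (2 : ℝ) * 2 ^ (Fintype.card V * a) ≤ Real.exp (Fintype.card V * a + 1) := by
    have hexp_one := Real.exp_nat_mul 1 (Fintype.card V * a + 1)
    push_cast at hexp_one
    rw [← pow_succ', ← mul_one (_ + 1 : ℝ), hexp_one]
    gcongr
    linarith [Real.add_one_le_exp 1]
  have hexp : Real.exp (η * |discrepancy R T|) ≤
      Real.exp (Fintype.card V * a + 1 + 2 * η ^ 2 * #R) :=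
    calc Real.exp (η * |discrepancy R T|)
        ≤ 2 * ((1 + 2 * η ^ 2) ^ #R * 2 ^ (Fintype.card V * a)) :=
          (exp_mul_abs_discrepancy_le hη.le R T).trans (by gcongr)
      _ = (2 * 2 ^ (Fintype.card V * a)) * (1 + 2 * η ^ 2) ^ #R := by ring
      _ ≤ _ := by
          rw [Real.exp_add]
          gcongr
  have hdisc := (Real.exp_le_exp.1 hexp).trans_lt hε
  rw [mul_assoc] at hdisc
  rw [mul_div_assoc]
  exact lt_of_mul_lt_mul_left hdisc hη.le

end Discrepancy

section Counting

variable {α V : Type*} [Fintype α] [DecidableEq α] [Fintype V]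

lemma card_mul_card_filter_le (j : α) (P : (α → V) → Prop) [DecidablePred P] {b : ℕ}
    (hP : ∀ t, #{y | P (Function.update t j y)} ≤ b) :
    Fintype.card V * #{t | P t} ≤ b * Fintype.card V ^ Fintype.card α := by
  let swap (p : (α → V) × V) : (α → V) × V := (Function.update p.1 j p.2, p.1 j)
  have hswap : Function.Involutive swap := fun p => by simp [swap]
  calc Fintype.card V * #{t | P t} = #{p : (α → V) × V | P p.1} := by
        rw [mul_comm, ← card_univ (α := V), ← card_product]
        congr 1
        ext p
        simp
    _ = #{p : (α → V) × V | P (swap p).1} :=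
        card_equiv hswap.toPerm fun p => by simp [hswap p]
    _ = ∑ t, #{y | P (Function.update t j y)} := by
        simp only [card_filter, Fintype.sum_prod_type, swap]
    _ ≤ b * Fintype.card V ^ Fintype.card α := by
        simpa [mul_comm] using sum_le_card_nsmul univ _ b fun t _ => hP t

lemma card_mul_card_filter_exists_le {κ : Type*} [Fintype κ] (j : κ → α)
    (P : κ → (α → V) → Prop) [∀ c, DecidablePred (P c)] [DecidablePred fun t => ∃ c, P c t]
    {b : ℕ} (hP : ∀ c t, #{y | P c (Function.update t (j c) y)} ≤ b) :
    Fintype.card V * #{t | ∃ c, P c t} ≤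
      Fintype.card κ * b * Fintype.card V ^ Fintype.card α := by
  have hunion : univ.filter (fun t => ∃ c, P c t) = univ.biUnion fun c => univ.filter (P c) := by
    ext t
    simp
  calc Fintype.card V * #{t | ∃ c, P c t}
      ≤ Fintype.card V * ∑ c, #{t | P c t} := by
        rw [hunion]
        gcongr
        exact card_biUnion_le
    _ = ∑ c, Fintype.card V * #{t | P c t} := mul_sum ..
    _ ≤ ∑ _c : κ, b * Fintype.card V ^ Fintype.card α :=
        sum_le_sum fun c _ => card_mul_card_filter_le (j c) (P c) (hP c)
    _ = Fintype.card κ * b * Fintype.card V ^ Fintype.card α := by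
        rw [sum_const, card_univ, smul_eq_mul, mul_assoc]

end Counting

/-- The relational structures with underlying set `V` whose symbol `i` has arity `ar i`. -/
abbrev RelStructure {ι : Type*} (ar : ι → ℕ) (V : Type*) :=
  ∀ i, Finset (Fin (ar i) → V)

namespace RelStructure

section Ball

variable {ι V : Type*} [Fintype ι] {ar : ι → ℕ} (R : RelStructure ar V)

/-- The neighbourhood of `x` in the Gaifman graph of `R`: all elements occurring in a tuple that
contains `x`. It contains `x` itself unless `x` occurs in no tuple. -/
noncomputable def neighborFinset (x : V) : Finset V :=
  univ.biUnion fun i => ((R i).filter fun t => ∃ j, t j = x).biUnion fun t => univ.image t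

/-- The ball of radius `l` around `x` in the Gaifman graph of `R`. -/
noncomputable def ball (x : V) : ℕ → Finset V
  | 0 => {x}
  | l + 1 => ball x l ∪ (ball x l).biUnion R.neighborFinset

variable {R}

lemma mem_neighborFinset {x y : V} :
    y ∈ R.neighborFinset x ↔ ∃ i, ∃ t ∈ R i, (∃ j, t j = x) ∧ ∃ j, t j = y := by
  simp [neighborFinset, and_assoc]

lemma card_neighborFinset_le {r : ℕ} (har : ∀ i, ar i ≤ r) (x : V) :
    #(R.neighborFinset x) ≤ r * degree ar R x := by
  calc #(R.neighborFinset x)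
      ≤ ∑ i, ∑ t ∈ R i with ∃ j, t j = x, #(univ.image t) :=
        card_biUnion_le.trans (sum_le_sum fun i _ => card_biUnion_le)
    _ ≤ ∑ i, ∑ t ∈ R i with ∃ j, t j = x, r * #{j | t j = x} := by
        refine sum_le_sum fun i _ => sum_le_sum fun t ht => ?_
        obtain ⟨j, hj⟩ := (mem_filter.1 ht).2
        have himage : #(univ.image t) ≤ r := card_image_le.trans (by simpa using har i)
        exact himage.trans (Nat.le_mul_of_pos_right r (card_pos.2 ⟨j, by simpa using hj⟩))
    _ ≤ ∑ i, ∑ t ∈ R i, r * #{j | t j = x} :=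
        sum_le_sum fun i _ => sum_le_sum_of_subset (filter_subset _ _)
    _ = r * degree ar R x := by simp only [degree, mul_sum]

lemma card_ball_le {r Δ : ℕ} (har : ∀ i, ar i ≤ r) (hdeg : ∀ x, degree ar R x ≤ Δ) (x : V)
    (l : ℕ) : #(R.ball x l) ≤ (1 + r * Δ) ^ l := by
  induction l with
  | zero => simp [ball]
  | succ l ih =>
    have hnbr (y : V) : #(R.neighborFinset y) ≤ r * Δ :=
      (card_neighborFinset_le har y).trans (Nat.mul_le_mul_left r (hdeg y))
    calc #(R.ball x (l + 1))
        ≤ #(R.ball x l) + #(R.ball x l) * (r * Δ) :=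
          (card_union_le _ _).trans
            (Nat.add_le_add_left (card_biUnion_le_card_mul _ _ _ fun y _ => hnbr y) _)
      _ = #(R.ball x l) * (1 + r * Δ) := by ring
      _ ≤ (1 + r * Δ) ^ (l + 1) := Nat.mul_le_mul_right _ ih

lemma ball_mono (x : V) : Monotone (R.ball x) :=
  monotone_nat_of_le_succ fun _ => subset_union_left

lemma self_mem_ball (x : V) (l : ℕ) : x ∈ R.ball x l :=
  ball_mono x (Nat.zero_le l) (mem_singleton_self x)

lemma mem_ball_succ {x y z : V} {l : ℕ} (hy : y ∈ R.ball x l) (hz : z ∈ R.neighborFinset y) :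
    z ∈ R.ball x (l + 1) :=
  mem_union_right _ (mem_biUnion.2 ⟨y, hy, hz⟩)

end Ball

section InsertTuple

variable {ι V : Type*} {ar : ι → ℕ} (R : RelStructure ar V) (i : ι) (t : Fin (ar i) → V)

/-- The structure obtained from `R` by adding the tuple `t` to the relation `R i`. -/
noncomputable def insertTuple : RelStructure ar V :=
  Function.update R i (insert t (R i))

variable {R i t}

lemma insertTuple_self : R.insertTuple i t i = insert t (R i) :=
  Function.update_self ..

lemma insertTuple_of_ne {i' : ι} (h : i' ≠ i) : R.insertTuple i t i' = R i' :=
  Function.update_of_ne h ..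

lemma mem_or_eq_of_mem_insertTuple {s : Σ i, Fin (ar i) → V}
    (hs : s.2 ∈ R.insertTuple i t s.1) : s.2 ∈ R s.1 ∨ s = ⟨i, t⟩ := by
  obtain ⟨i', u⟩ := s
  rcases eq_or_ne i' i with rfl | hi
  · rw [insertTuple_self, mem_insert] at hs
    exact hs.symm.imp_right fun (h : u = t) => by rw [h]
  · exact Or.inl (by rwa [insertTuple_of_ne hi] at hs)

lemma degree_insertTuple_le [Fintype ι] (x : V) :
    degree ar (R.insertTuple i t) x ≤ degree ar R x + #{j | t j = x} := by
  have hself : ∑ u ∈ insert t (R i), #{j | u j = x}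
      ≤ #{j | t j = x} + ∑ u ∈ R i, #{j | u j = x} := by
    by_cases ht : t ∈ R i
    · rw [insert_eq_of_mem ht]
      exact Nat.le_add_left _ _
    · rw [sum_insert ht]
  have hother : ∑ i' ∈ univ.erase i, ∑ u ∈ R.insertTuple i t i', #{j | u j = x}
      = ∑ i' ∈ univ.erase i, ∑ u ∈ R i', #{j | u j = x} :=
    sum_congr rfl fun i' hi' => by rw [insertTuple_of_ne (ne_of_mem_erase hi')]
  simp only [degree]
  rw [← add_sum_erase univ _ (mem_univ i), ← add_sum_erase univ _ (mem_univ i), hother,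
    insertTuple_self]
  omega

end InsertTuple

end RelStructure

section Cycle

variable {ι V : Type*} {ar : ι → ℕ}

lemma IsRelCycleData.rotate {R : ∀ i, Finset (Fin (ar i) → V)} {n : ℕ} {x : Fin (n + 1) → V}
    {s : Fin (n + 1) → Σ i, Fin (ar i) → V} (h : IsRelCycleData ar R (n + 1) x s)
    (c : Fin (n + 1)) :
    IsRelCycleData ar R (n + 1) (fun p => x (p + c)) (fun p => s (p + c)) := by
  obtain ⟨hlen, hx, hs, hmem, hleft, hright⟩ := h
  refine ⟨hlen, hx.comp (add_left_injective c), hs.comp (add_left_injective c),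
    fun p => hmem (p + c), fun p => hleft (p + c), fun p => ?_⟩
  obtain ⟨j, hj⟩ := hright (p + c)
  refine ⟨j, hj.trans (congrArg x (Fin.ext ?_))⟩
  simp only [Fin.val_add, Nat.mod_add_mod]
  rw [Nat.add_right_comm]

variable [Fintype ι] {R : RelStructure ar V} {i : ι} {t : Fin (ar i) → V}

lemma IsRelCycleData.exists_mem_ball_of_last {n : ℕ} {x : Fin (n + 1) → V}
    {s : Fin (n + 1) → Σ i, Fin (ar i) → V}
    (h : IsRelCycleData ar (R.insertTuple i t) (n + 1) x s) (hlast : s (Fin.last n) = ⟨i, t⟩) :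
    ∃ j j', j ≠ j' ∧ t j' ∈ R.ball (t j) n := by
  obtain ⟨hlen, hx, hs, hmem, hleft, hright⟩ := h
  have hpath (p : Fin (n + 1)) : x p ∈ R.ball (x 0) p := by
    induction p using Fin.induction with
    | zero => exact RelStructure.self_mem_ball _ _
    | succ p ih =>
      have hR := (RelStructure.mem_or_eq_of_mem_insertTuple (hmem p.castSucc)).resolve_right
        fun heq => p.castSucc_ne_last (hs (heq.trans hlast.symm))
      have hnext : x ⟨(p.castSucc + 1) % (n + 1), Nat.mod_lt _ n.succ_pos⟩ = x p.succ :=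
        congrArg x (Fin.ext (Nat.mod_eq_of_lt (Nat.succ_lt_succ p.isLt)))
      exact RelStructure.mem_ball_succ ih (RelStructure.mem_neighborFinset.2
        ⟨_, _, hR, hleft p.castSucc, hnext ▸ hright p.castSucc⟩)
  have hclose : x ⟨(Fin.last n + 1) % (n + 1), Nat.mod_lt _ n.succ_pos⟩ = x 0 :=
    congrArg x (Fin.ext (Nat.mod_self (n + 1)))
  obtain ⟨j', hj'⟩ : ∃ j', t j' = x (Fin.last n) := by
    have hmem := hleft (Fin.last n)
    rwa [hlast] at hmem
  obtain ⟨j, hj⟩ : ∃ j, t j = x 0 := by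
    have hmem := hright (Fin.last n)
    rwa [hlast, hclose] at hmem
  refine ⟨j, j', ?_, ?_⟩
  · rintro rfl
    have hzero : (0 : Fin (n + 1)) = Fin.last n := hx (hj.symm.trans hj')
    have hval : 0 = n := congrArg Fin.val hzero
    omega
  · rw [hj, hj']
    exact hpath (Fin.last n)

lemma IsRelCycleData.exists_mem_ball {m : ℕ} {x : Fin m → V} {s : Fin m → Σ i, Fin (ar i) → V}
    (h : IsRelCycleData ar (R.insertTuple i t) m x s) {p : Fin m} (hp : s p = ⟨i, t⟩) :
    ∃ j j', j ≠ j' ∧ t j' ∈ R.ball (t j) (m - 1) := by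
  obtain ⟨n, rfl⟩ := Nat.exists_eq_succ_of_ne_zero p.pos.ne'
  exact (h.rotate (p - Fin.last n)).exists_mem_ball_of_last (by simpa using hp)

lemma HasRelCycle.of_insertTuple {m k : ℕ} (h : HasRelCycle ar (R.insertTuple i t) m)
    (hmk : m ≤ k) (ht : Pairwise fun j j' => t j' ∉ R.ball (t j) k) : HasRelCycle ar R m := by
  rcases h with ⟨rfl, i', u, hu, j, j', hj, hjj'⟩ | ⟨x, s, hcycle⟩
  · rcases RelStructure.mem_or_eq_of_mem_insertTuple (s := ⟨i', u⟩) hu with hR | heq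
    · exact Or.inl ⟨rfl, i', u, hR, j, j', hj, hjj'⟩
    · cases heq
      exact absurd (hjj' ▸ RelStructure.self_mem_ball (t j) k) (ht hj)
  · have hne (p : Fin m) : s p ≠ ⟨i, t⟩ := by
      intro hp
      obtain ⟨j, j', hj, hball⟩ := hcycle.exists_mem_ball hp
      exact ht hj (RelStructure.ball_mono _ (by omega) hball)
    obtain ⟨hlen, hx, hs, hmem, hleft, hright⟩ := hcycle
    exact Or.inr ⟨x, s, hlen, hx, hs, fun p =>
      (RelStructure.mem_or_eq_of_mem_insertTuple (hmem p)).resolve_right (hne p), hleft, hright⟩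

end Cycle

namespace RelStructure

section Sparse

variable {ι V : Type*} [Fintype ι] {ar : ι → ℕ} {R : RelStructure ar V} {k Δ : ℕ}

/-- `R` has girth at least `k` and all its degrees are at most `Δ`. -/
structure IsSparse (R : RelStructure ar V) (k Δ : ℕ) : Prop where
  le_of_hasRelCycle : ∀ m, HasRelCycle ar R m → k ≤ m
  degree_le : ∀ x, degree ar R x ≤ Δ

/-- A tuple that can be added to a sparse structure: its coordinates have degree below `Δ` and are
pairwise at distance greater than `k`. -/
structure IsAdmissible (R : RelStructure ar V) (k Δ : ℕ) {a : ℕ} (t : Fin a → V) : Prop where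
  degree_lt : ∀ j, degree ar R (t j) < Δ
  notMem_ball : Pairwise fun j j' => t j' ∉ R.ball (t j) k

lemma IsAdmissible.injective {a : ℕ} {t : Fin a → V} (ht : R.IsAdmissible k Δ t) :
    Function.Injective t := by
  intro j j' h
  by_contra hne
  exact ht.notMem_ball hne (h ▸ self_mem_ball (t j) k)

lemma IsAdmissible.notMem {i : ι} {t : Fin (ar i) → V} (ht : R.IsAdmissible k Δ t) (hk : 0 < k)
    (hi : 2 ≤ ar i) : t ∉ R i := by
  intro hmem
  have : Nontrivial (Fin (ar i)) := Fin.nontrivial_iff_two_le.2 hi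
  obtain ⟨j, j', hne⟩ := exists_pair_ne (Fin (ar i))
  have hnbr : t j' ∈ R.neighborFinset (t j) :=
    mem_neighborFinset.2 ⟨i, t, hmem, ⟨j, rfl⟩, j', rfl⟩
  exact ht.notMem_ball hne (ball_mono _ hk (mem_ball_succ (self_mem_ball (t j) 0) hnbr))

lemma isSparse_empty : IsSparse (fun _ => ∅ : RelStructure ar V) k Δ where
  le_of_hasRelCycle := by
    rintro m (⟨-, i, t, ht, -⟩ | ⟨x, s, hlen, -, -, hmem, -⟩)
    · exact absurd ht (notMem_empty t)
    · exact absurd (hmem ⟨0, by omega⟩) (notMem_empty _)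
  degree_le x := by simp [degree]

lemma IsSparse.insertTuple (hR : R.IsSparse k Δ) {i : ι} {t : Fin (ar i) → V}
    (ht : R.IsAdmissible k Δ t) : (R.insertTuple i t).IsSparse k Δ where
  le_of_hasRelCycle m hm := by
    by_contra! hlt
    exact hlt.not_ge (hR.le_of_hasRelCycle m (hm.of_insertTuple hlt.le ht.notMem_ball))
  degree_le x := by
    refine (degree_insertTuple_le x).trans ?_
    by_cases hx : ∃ j, t j = x
    · obtain ⟨j, rfl⟩ := hx
      have hone : #{j' | t j' = t j} ≤ 1 := card_le_one.2 fun p hp q hq =>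
        ht.injective ((mem_filter.1 hp).2.trans (mem_filter.1 hq).2.symm)
      exact (Nat.add_le_add_left hone _).trans (ht.degree_lt j)
    · rw [filter_false_of_mem fun j _ hj => hx ⟨j, hj⟩, card_empty]
      exact hR.degree_le x

end Sparse

section AdmissibleCount

variable {ι V : Type*} [Fintype ι] [Fintype V] {ar : ι → ℕ} {R : RelStructure ar V} {k Δ : ℕ}

lemma sum_degree : ∑ x, degree ar R x = ∑ i, ar i * #(R i) := by
  have hcount {i : ι} (t : Fin (ar i) → V) : ∑ x, #{j | t j = x} = ar i := by
    rw [← card_eq_sum_card_fiberwise (f := t) fun _ _ => mem_coe.2 (mem_univ _),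
      card_univ, Fintype.card_fin]
  simp only [degree]
  rw [sum_comm]
  refine sum_congr rfl fun i _ => ?_
  rw [sum_comm, sum_congr rfl fun t _ => hcount t, sum_const, smul_eq_mul, mul_comm]

lemma card_le_degree_mul_le : #{x | Δ ≤ degree ar R x} * Δ ≤ ∑ i, ar i * #(R i) := by
  calc #{x | Δ ≤ degree ar R x} * Δ
      ≤ ∑ x with Δ ≤ degree ar R x, degree ar R x :=
        card_nsmul_le_sum _ _ _ fun x hx => (mem_filter.1 hx).2
    _ ≤ ∑ x, degree ar R x := sum_le_sum_of_subset (filter_subset _ _)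
    _ = ∑ i, ar i * #(R i) := sum_degree

lemma card_mul_card_not_isAdmissible_le {r : ℕ} (har : ∀ i, ar i ≤ r)
    (hdeg : ∀ x, degree ar R x ≤ Δ) (a : ℕ) :
    Fintype.card V * #{t : Fin a → V | ¬ R.IsAdmissible k Δ t} ≤
      (a * #{x | Δ ≤ degree ar R x} + a ^ 2 * (1 + r * Δ) ^ k) * Fintype.card V ^ a := by
  have hsaturated := card_mul_card_filter_exists_le (V := V) (κ := Fin a) id
    (fun j t => Δ ≤ degree ar R (t j)) (b := #{x | Δ ≤ degree ar R x}) (by simp)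
  have hclose := card_mul_card_filter_exists_le (V := V) (κ := Fin a × Fin a) Prod.snd
    (fun c t => c.1 ≠ c.2 ∧ t c.2 ∈ R.ball (t c.1) k) (b := (1 + r * Δ) ^ k) fun c t => by
      rcases eq_or_ne c.1 c.2 with hc | hc
      · simp [hc]
      · simpa [hc, Function.update_of_ne hc] using card_ball_le har hdeg (t c.1) k
  have hsub : ({t : Fin a → V | ¬ R.IsAdmissible k Δ t} : Finset _) ⊆
      ({t | ∃ j, Δ ≤ degree ar R (t j)} : Finset _) ∪
        ({t | ∃ c : Fin a × Fin a, c.1 ≠ c.2 ∧ t c.2 ∈ R.ball (t c.1) k} : Finset _) := by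
    intro t ht
    simp only [mem_union, mem_filter, mem_univ, true_and] at ht ⊢
    by_contra! hgood
    exact ht ⟨hgood.1, fun j j' hj => hgood.2 (j, j') hj⟩
  simp only [Fintype.card_prod, Fintype.card_fin] at hsaturated hclose
  refine (Nat.mul_le_mul_left _ ((card_le_card hsub).trans (card_union_le _ _))).trans ?_
  rw [mul_add, add_mul, sq]
  exact Nat.add_le_add hsaturated hclose

lemma mul_card_le_degree_le_of_card_le {r M : ℕ} (har : ∀ i, ar i ≤ r) (hM : ∀ i, #(R i) ≤ M)
    (hΔ : 0 < Δ) {C η : ℝ} (hC : 0 ≤ C)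
    (hMΔ : C * (Fintype.card ι * (r * M)) ≤ η * Δ * Fintype.card V) :
    C * #{x | Δ ≤ degree ar R x} ≤ η * Fintype.card V := by
  have hmarkov : (#{x | Δ ≤ degree ar R x} * Δ : ℝ) ≤ Fintype.card ι * (r * M) := by
    have hsum : ∑ i, ar i * #(R i) ≤ Fintype.card ι * (r * M) := by
      simpa using sum_le_card_nsmul univ _ _ fun i _ => Nat.mul_le_mul (har i) (hM i)
    exact_mod_cast card_le_degree_mul_le.trans hsum
  refine le_of_mul_le_mul_right ?_ (Nat.cast_pos.2 hΔ)
  calc C * #{x | Δ ≤ degree ar R x} * (Δ : ℝ)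
      = C * (#{x | Δ ≤ degree ar R x} * Δ) := mul_assoc ..
    _ ≤ C * (Fintype.card ι * (r * M)) := by gcongr
    _ ≤ η * Fintype.card V * Δ := by linarith

lemma two_mul_card_not_isAdmissible_le [Nonempty V] {r : ℕ} (har : ∀ i, ar i ≤ r)
    (hdeg : ∀ x, degree ar R x ≤ Δ) {η : ℝ}
    (hsat : 4 * r * #{x | Δ ≤ degree ar R x} ≤ η * Fintype.card V)
    (hV : 4 * r ^ 2 * (1 + r * Δ) ^ k ≤ η * Fintype.card V) {a : ℕ} (ha : a ≤ r) :
    2 * (#{t : Fin a → V | ¬ R.IsAdmissible k Δ t} : ℝ) ≤ η * Fintype.card V ^ a := by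
  have hnat := card_mul_card_not_isAdmissible_le (k := k) har hdeg a
  have hbad : (Fintype.card V * #{t : Fin a → V | ¬ R.IsAdmissible k Δ t} : ℝ) ≤
      (a * #{x | Δ ≤ degree ar R x} + a ^ 2 * (1 + r * Δ) ^ k) * Fintype.card V ^ a := by
    exact_mod_cast hnat
  have hrate : 2 * (a * #{x | Δ ≤ degree ar R x} + a ^ 2 * (1 + r * Δ) ^ k : ℝ) ≤
      Fintype.card V * η :=
    calc 2 * (a * #{x | Δ ≤ degree ar R x} + a ^ 2 * (1 + r * Δ) ^ k : ℝ)
        ≤ 2 * (r * #{x | Δ ≤ degree ar R x} + r ^ 2 * (1 + r * Δ) ^ k) := by gcongr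
      _ ≤ Fintype.card V * η := by linarith
  have hscaled := mul_le_mul_of_nonneg_right hrate
    (by positivity : (0 : ℝ) ≤ Fintype.card V ^ a)
  refine le_of_mul_le_mul_left ?_ (Nat.cast_pos.2 (Fintype.card_pos (α := V)))
  linarith

lemma card_compl_isAdmissible_le {η : ℝ} (hη : η ≤ 1) {a : ℕ}
    (h : 2 * (#{t : Fin a → V | ¬ R.IsAdmissible k Δ t} : ℝ) ≤ η * Fintype.card V ^ a) :
    (#({t : Fin a → V | R.IsAdmissible k Δ t} : Finset _)ᶜ : ℝ) ≤
      η * #{t : Fin a → V | R.IsAdmissible k Δ t} := by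
  have htotal : (#{t : Fin a → V | R.IsAdmissible k Δ t} : ℝ) +
      #{t : Fin a → V | ¬ R.IsAdmissible k Δ t} = Fintype.card V ^ a := by
    have := card_filter_add_card_filter_not (s := univ) fun t : Fin a → V => R.IsAdmissible k Δ t
    rw [card_univ, Fintype.card_fun, Fintype.card_fin] at this
    exact_mod_cast this
  rw [compl_filter]
  rw [← htotal] at h
  nlinarith

end AdmissibleCount

section Greedy

variable {ι V : Type*} [Fintype ι] [Fintype V] [Nonempty V] {ar : ι → ℕ} {r k Δ M : ℕ} {η : ℝ}

lemma IsSparse.exists_isAdmissible_discrepancyPotential_insert_le {R : RelStructure ar V}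
    (hR : R.IsSparse k Δ) (hk : 0 < k) (hΔ : 0 < Δ) (har : ∀ i, ar i ≤ r) (hη : 0 ≤ η)
    (hη1 : η ≤ 1) (hMΔ : 4 * r ^ 2 * Fintype.card ι * M ≤ η * Δ * Fintype.card V)
    (hV : 4 * r ^ 2 * (1 + r * Δ) ^ k ≤ η * Fintype.card V) (hM : ∀ i, #(R i) ≤ M) {i : ι}
    (hi : 2 ≤ ar i) :
    ∃ t, R.IsAdmissible k Δ t ∧ discrepancyPotential η (insert t (R i)) ≤
      (1 + 2 * η ^ 2) * discrepancyPotential η (R i) := by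
  have hsat := mul_card_le_degree_le_of_card_le (C := 4 * r) (η := η) har hM hΔ
    (by positivity) (by linarith)
  have hbad := two_mul_card_not_isAdmissible_le (k := k) har hR.degree_le hsat hV (har i)
  obtain ⟨t, ht, hpot⟩ := exists_mem_discrepancyPotential_insert_le (R i)
    (fun t ht => (mem_filter.1 ht).2.notMem hk hi) hη hη1 (card_compl_isAdmissible_le hη1 hbad)
  exact ⟨t, (mem_filter.1 ht).2, hpot⟩

lemma exists_isSparse_discrepancyPotential_le (hk : 0 < k) (hΔ : 0 < Δ) (har : ∀ i, ar i ≤ r)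
    (hη : 0 ≤ η) (hη1 : η ≤ 1)
    (hMΔ : 4 * r ^ 2 * Fintype.card ι * M ≤ η * Δ * Fintype.card V)
    (hV : 4 * r ^ 2 * (1 + r * Δ) ^ k ≤ η * Fintype.card V) (c : ι → ℕ) (hcM : ∀ i, c i ≤ M)
    (hc : ∀ i, c i ≠ 0 → 2 ≤ ar i) :
    ∃ R : RelStructure ar V, R.IsSparse k Δ ∧ ∀ i, #(R i) = c i ∧
      discrepancyPotential η (R i) ≤ (1 + 2 * η ^ 2) ^ #(R i) * 2 ^ (Fintype.card V * ar i) := by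
  induction c using WellFoundedLT.induction with
  | ind c ih =>
  by_cases hzero : ∀ i, c i = 0
  · refine ⟨fun _ => ∅, isSparse_empty, fun i => ?_⟩
    simp [hzero i, discrepancyPotential_empty]
  push Not at hzero
  obtain ⟨i, hi⟩ := hzero
  have hle (i' : ι) : Function.update c i (c i - 1) i' ≤ c i' := by
    rcases eq_or_ne i' i with rfl | hne <;> simp [*]
  obtain ⟨R, hR, hRc⟩ := ih (Function.update c i (c i - 1))
    (Pi.lt_def.2 ⟨hle, i, by simpa using Nat.pos_of_ne_zero hi⟩)
    (fun i' => (hle i').trans (hcM i')) fun i' h => hc i' fun h0 => h (by simpa [h0] using hle i')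
  obtain ⟨t, ht, hpot⟩ := hR.exists_isAdmissible_discrepancyPotential_insert_le hk hΔ har hη hη1
    hMΔ hV (fun i' => (hRc i').1.trans_le ((hle i').trans (hcM i'))) (hc i hi)
  refine ⟨R.insertTuple i t, hR.insertTuple ht, fun i' => ?_⟩
  rcases eq_or_ne i' i with rfl | hne
  · obtain ⟨hcard, hpotR⟩ := hRc i'
    rw [insertTuple_self, card_insert_of_notMem (ht.notMem hk (hc i' hi))]
    refine ⟨by rw [hcard, Function.update_self, Nat.sub_add_cancel (Nat.one_le_iff_ne_zero.2 hi)],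
      hpot.trans ?_⟩
    rw [pow_succ' (1 + 2 * η ^ 2), mul_assoc]
    gcongr
  · simpa only [insertTuple_of_ne hne, Function.update_of_ne hne] using hRc i'

end Greedy

end RelStructure

lemma exists_expander_parameters (p r k : ℕ) {ε : ℝ} (hε : 0 < ε) :
    ∃ (η : ℝ) (D Δ N : ℕ), 0 < η ∧ η ≤ 1 ∧ 0 < Δ ∧ 0 < N ∧ ∀ n, N ≤ n →
      4 * r ^ 2 * p * ↑(D * n) ≤ η * Δ * n ∧ 4 * r ^ 2 * (1 + r * Δ) ^ k ≤ η * n ∧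
        n * r + 1 + 2 * η ^ 2 * ↑(D * n) < η * ε * ↑(D * n) := by
  obtain ⟨η, hη, hη1, hηε⟩ : ∃ η : ℝ, 0 < η ∧ η ≤ 1 ∧ η ≤ ε / 4 :=
    ⟨min 1 (ε / 4), by positivity, min_le_left _ _, min_le_right _ _⟩
  obtain ⟨D, hD⟩ := exists_nat_gt (2 * (r + 1) / (η * ε))
  obtain ⟨Δ, hΔ⟩ := exists_nat_gt (4 * r ^ 2 * p * D / η)
  obtain ⟨N, hN⟩ := exists_nat_gt (4 * r ^ 2 * (1 + r * Δ) ^ k / η)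
  have hΔ0 : (0 : ℝ) < Δ := lt_of_le_of_lt (by positivity) hΔ
  have hN0 : (0 : ℝ) < N := lt_of_le_of_lt (by positivity) hN
  rw [div_lt_iff₀' hη] at hΔ hN
  rw [div_lt_iff₀' (by positivity)] at hD
  have hexpander : r + 1 + 2 * η ^ 2 * D < η * ε * D := by
    have hηD : η * D * η ≤ η * D * (ε / 4) := by gcongr
    linarith
  refine ⟨η, D, Δ, N, hη, hη1, mod_cast hΔ0, mod_cast hN0, fun n hn => ?_⟩
  have hNn : (N : ℝ) ≤ n := mod_cast hn
  have hn1 : (1 : ℝ) ≤ n := mod_cast (Nat.cast_pos.1 hN0).trans_le hn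
  have hΔn := mul_le_mul_of_nonneg_right hΔ.le (hN0.le.trans hNn)
  have hexpandern := mul_lt_mul_of_pos_right hexpander (hN0.trans_le hNn)
  push_cast
  refine ⟨by linarith, hN.le.trans (by gcongr), by linarith⟩

/-- Lemma (random): for a finite relational type with all symbols at most `r`-ary, a girth
bound `k` and `ε > 0`, there is a degree bound `Δ` such that for all sufficiently large `n`
there is a relational structure on `n` elements with girth at least `k`, maximal degree at
most `Δ`, all of whose relations of arity at least `2` are ε-expander relations. -/
theorem exists_large_girth_expander_structure
    {ι : Type*} [Fintype ι] (ar : ι → ℕ) (r k : ℕ) (hk : 0 < k)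
    (har : ∀ i, ar i ≤ r) (ε : ℝ) (hε : 0 < ε) :
    ∃ Δ : ℕ, 0 < Δ ∧ ∃ N : ℕ, ∀ n, N ≤ n →
      ∃ R : ∀ i, Finset (Fin (ar i) → Fin n),
        (∀ m, HasRelCycle ar R m → k ≤ m) ∧
        maxDegree ar R ≤ Δ ∧
        ∀ i, 2 ≤ ar i → IsExpanderRel ε (R i) := by
  obtain ⟨η, D, Δ, N, hη, hη1, hΔ, hN, hparam⟩ :=
    exists_expander_parameters (Fintype.card ι) r k hε
  refine ⟨Δ, hΔ, N, fun n hn => ?_⟩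
  obtain ⟨hDΔ, hNΔ, hD⟩ := hparam n hn
  have : Nonempty (Fin n) := ⟨⟨0, hN.trans_le hn⟩⟩
  obtain ⟨R, hR, hRc⟩ := RelStructure.exists_isSparse_discrepancyPotential_le (V := Fin n)
    (M := D * n) hk hΔ har hη.le hη1 (by simpa using hDΔ) (by simpa using hNΔ)
    (fun i => if 2 ≤ ar i then D * n else 0) (fun i => by split_ifs <;> simp)
    (fun i hi => by by_contra h; simp [h] at hi)
  refine ⟨R, hR.le_of_hasRelCycle, Finset.sup_le fun x _ => hR.degree_le x, fun i hi => ?_⟩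
  obtain ⟨hcard, hpot⟩ := hRc i
  refine isExpanderRel_of_discrepancyPotential_le hη hpot ?_
  rw [hcard, if_pos hi, Fintype.card_fin]
  refine lt_of_le_of_lt ?_ hD
  gcongr
  exact har i
end
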